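/- Let A be an m-accretive operator on a Banach space X (accretive with Range(Id + λA) = X for some, hence all, λ > 0). If u, v : [0,T] → X are two integral solutions of u' + Au ∋ h with respective initial data u₀, v₀, i.e., u(0)=u₀, v(0)=v₀, u,v ∈ C([0,T];X), and for all (û, ẑ) ∈ A and 0 ≤ s ≤ t ≤ T, ‖u(t)-û‖ - ‖u(s)-û‖ ≤ ∫_s^t [u(τ)-û, h(τ)-ẑ] dτ (and similarly for v), then ‖u(t) - v(t)‖ ≤ ‖u₀ - v₀‖ for all t ∈ [0,T]. -/

import Mathlib

open Filter Topology MeasureTheory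

/-- The bracket `[a, b] = lim_{λ↓0} (‖a + λb‖ - ‖a‖)/λ` on a normed space, realized as the
infimum of the (monotone) difference quotients over `λ > 0`. (For `a = 0` the quotients
are constantly `‖b‖`, so `[0, b] = ‖b‖`.) -/
noncomputable def bracket {X : Type*} [NormedAddCommGroup X] [NormedSpace ℝ X]
    (a b : X) : ℝ :=
  sInf ((fun l : ℝ => (‖a + l • b‖ - ‖a‖) / l) '' Set.Ioi (0 : ℝ))

lemma bracket_quotient_bounds {X : Type*} [NormedAddCommGroup X] [NormedSpace ℝ X]
    (a b : X) {l : ℝ} (hl : 0 < l) :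
    -‖b‖ ≤ (‖a + l • b‖ - ‖a‖) / l ∧ (‖a + l • b‖ - ‖a‖) / l ≤ ‖b‖ := by
  have hn : ‖l • b‖ = l * ‖b‖ := by rw [norm_smul, Real.norm_of_nonneg hl.le]
  rw [le_div_iff₀ hl, div_le_iff₀ hl]
  constructor
  · have := norm_sub_le (a + l • b) (l • b)
    rw [add_sub_cancel_right] at this
    linarith
  · linarith [norm_add_le a (l • b)]

lemma bddBelow_bracket_quotient {X : Type*} [NormedAddCommGroup X] [NormedSpace ℝ X]
    (a b : X) :
    BddBelow ((fun l : ℝ => (‖a + l • b‖ - ‖a‖) / l) '' Set.Ioi (0 : ℝ)) := by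
  refine ⟨-‖b‖, ?_⟩
  rintro _ ⟨l, hl, rfl⟩
  exact (bracket_quotient_bounds a b hl).1

lemma bracket_le_quotient {X : Type*} [NormedAddCommGroup X] [NormedSpace ℝ X]
    (a b : X) {l : ℝ} (hl : 0 < l) : bracket a b ≤ (‖a + l • b‖ - ‖a‖) / l :=
  csInf_le (bddBelow_bracket_quotient a b) ⟨l, hl, rfl⟩

lemma abs_bracket_le {X : Type*} [NormedAddCommGroup X] [NormedSpace ℝ X]
    (a b : X) : |bracket a b| ≤ ‖b‖ := by
  refine abs_le.2 ⟨le_csInf (Set.nonempty_Ioi.image _) ?_,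
    (bracket_le_quotient a b one_pos).trans (bracket_quotient_bounds a b one_pos).2⟩
  rintro _ ⟨l, hl, rfl⟩
  exact (bracket_quotient_bounds a b hl).1

lemma tendsto_bracket_quotient {X : Type*} [NormedAddCommGroup X] [NormedSpace ℝ X]
    (a b : X) :
    Tendsto (fun l : ℝ => (‖a + l • b‖ - ‖a‖) / l) (𝓝[>] 0) (𝓝 (bracket a b)) := by
  refine MonotoneOn.tendsto_nhdsGT ?_ (bddBelow_bracket_quotient a b)
  intro l hl m hm hlm
  have hl : 0 < l := hl
  have hm : 0 < m := hm
  have hmid : m • (a + l • b) = (m - l) • a + l • (a + m • b) := by module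
  have hnorm : m * ‖a + l • b‖ ≤ (m - l) * ‖a‖ + l * ‖a + m • b‖ := by
    calc m * ‖a + l • b‖ = ‖m • (a + l • b)‖ := by rw [norm_smul, Real.norm_of_nonneg hm.le]
      _ ≤ ‖(m - l) • a‖ + ‖l • (a + m • b)‖ := hmid ▸ norm_add_le _ _
      _ = _ := by
        rw [norm_smul, norm_smul, Real.norm_of_nonneg hl.le, Real.norm_of_nonneg (sub_nonneg.2 hlm)]
  change (‖a + l • b‖ - ‖a‖) / l ≤ (‖a + m • b‖ - ‖a‖) / m
  rw [div_le_div_iff₀ hl hm]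
  linarith

lemma integrable_bracket {X α : Type*} [NormedAddCommGroup X] [NormedSpace ℝ X]
    [MeasurableSpace α] {μ : Measure α} {a b : α → X}
    (ha : AEStronglyMeasurable a μ) (hb : Integrable b μ) :
    Integrable (fun x => bracket (a x) (b x)) μ := by
  refine hb.mono ?_ (Eventually.of_forall fun x => abs_bracket_le _ _)
  refine aestronglyMeasurable_of_tendsto_ae (𝓝[>] (0 : ℝ))
    (f := fun l x => (‖a x + l • b x‖ - ‖a x‖) / l) (fun l => ?_)
    (Eventually.of_forall fun x => tendsto_bracket_quotient (a x) (b x))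
  exact (((ha.add (hb.1.const_smul l)).norm.sub ha.norm).aemeasurable.div_const l).aestronglyMeasurable

/-- The defining properties of an integral solution of `u' + A u ∋ h` on `[0, T]`, without the
initial condition. -/
structure IsIntegralSolution {X : Type*} [NormedAddCommGroup X] [NormedSpace ℝ X]
    (A : Set (X × X)) (T : ℝ) (h u : ℝ → X) : Prop where
  continuousOn : ContinuousOn u (Set.Icc 0 T)
  sub_le : ∀ p ∈ A, ∀ s t : ℝ, 0 ≤ s → s ≤ t → t ≤ T →
    ‖u t - p.1‖ - ‖u s - p.1‖ ≤ ∫ τ in s..t, bracket (u τ - p.1) (h τ - p.2)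

lemma integrableOn_Icc_intervalIntegrable {E : Type*} [NormedAddCommGroup E] {f : ℝ → E}
    {T s t : ℝ} (hf : IntegrableOn f (Set.Icc 0 T)) (hs : 0 ≤ s) (hst : s ≤ t) (ht : t ≤ T) :
    IntervalIntegrable f volume s t := by
  refine IntegrableOn.intervalIntegrable (hf.mono_set ?_)
  rw [Set.uIcc_of_le hst]
  exact Set.Icc_subset_Icc hs ht

/-- If `F` dominates a difference quotient of the bracket, the bracket can be replaced by `F`. -/
lemma IsIntegralSolution.sub_le_integral {X : Type*} [NormedAddCommGroup X] [NormedSpace ℝ X]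
    {A : Set (X × X)} {T : ℝ} {h u : ℝ → X} (hu : IsIntegralSolution A T h u)
    (hh : IntegrableOn h (Set.Icc 0 T)) {p : X × X} (hp : p ∈ A) {l s t : ℝ} (hl : 0 < l)
    (hs : 0 ≤ s) (hst : s ≤ t) (ht : t ≤ T) {F : ℝ → ℝ} (hF : IntervalIntegrable F volume s t)
    (hle : ∀ τ ∈ Set.Ioo s t, ‖u τ - (p.1 + l • p.2) + l • h τ‖ ≤ ‖u τ - p.1‖ + l * F τ) :
    ‖u t - p.1‖ - ‖u s - p.1‖ ≤ ∫ τ in s..t, F τ := by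
  refine (hu.sub_le p hp s t hs hst ht).trans ?_
  have hint : IntegrableOn (fun τ => bracket (u τ - p.1) (h τ - p.2)) (Set.Icc 0 T) :=
    integrable_bracket
      ((hu.continuousOn.sub continuousOn_const).aestronglyMeasurable measurableSet_Icc)
      (hh.sub (integrableOn_const (by simp)))
  refine intervalIntegral.integral_mono_on_of_le_Ioo hst
    (integrableOn_Icc_intervalIntegrable hint hs hst ht) hF fun τ hτ => ?_
  refine (bracket_le_quotient _ _ hl).trans ?_
  rw [div_le_iff₀ hl]
  have heq : u τ - p.1 + l • (h τ - p.2) = u τ - (p.1 + l • p.2) + l • h τ := by module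
  rw [heq]
  linarith [hle τ hτ]

/-- The initial value of an integral solution lies in the closure of the domain of `A`. -/
lemma IsIntegralSolution.exists_norm_initial_sub_le {X : Type*} [NormedAddCommGroup X]
    [NormedSpace ℝ X] {A : Set (X × X)} {T : ℝ} {h u : ℝ → X}
    (hu : IsIntegralSolution A T h u) (hh : IntegrableOn h (Set.Icc 0 T)) (hT : 0 < T)
    (hm : ∀ l : ℝ, 0 < l → ∀ g : X, ∃ p ∈ A, p.1 + l • p.2 = g) {δ : ℝ} (hδ : 0 < δ) :
    ∃ p ∈ A, ‖u 0 - p.1‖ ≤ 4 * δ := by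
  obtain ⟨r, hr, hur⟩ := Metric.continuousWithinAt_iff.1
    (hu.continuousOn 0 ⟨le_rfl, hT.le⟩) δ hδ
  set t := min T (r / 2)
  have ht : 0 < t := lt_min hT (half_pos hr)
  have htT : t ≤ T := min_le_left _ _
  have hnear : ∀ τ ∈ Set.Icc 0 t, ‖u τ - u 0‖ ≤ δ := by
    intro τ hτ
    rw [← dist_eq_norm]
    refine (hur ⟨hτ.1, hτ.2.trans htT⟩ ?_).le
    rw [Real.dist_eq, sub_zero, abs_of_nonneg hτ.1]
    linarith [hτ.2, min_le_right T (r / 2)]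
  have hhi : IntervalIntegrable (fun τ => ‖h τ‖) volume 0 t :=
    integrableOn_Icc_intervalIntegrable hh.norm le_rfl ht.le htT
  set I := ∫ τ in (0 : ℝ)..t, ‖h τ‖
  have hI : 0 ≤ I := intervalIntegral.integral_nonneg ht.le fun _ _ => norm_nonneg _
  set l := t * δ / (δ + I)
  have hl : 0 < l := by positivity
  obtain ⟨p, hp, hpl⟩ := hm l hl (u 0)
  refine ⟨p, hp, ?_⟩
  by_contra! hfar
  have hest := hu.sub_le_integral hh hp hl le_rfl ht.le htT
    (F := fun τ => ‖h τ‖ - 2 * δ / l) (hhi.sub intervalIntegrable_const) (by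
      intro τ hτ
      have h1 := hnear τ ⟨hτ.1.le, hτ.2.le⟩
      have h2 : ‖u τ - (p.1 + l • p.2) + l • h τ‖ ≤ ‖u τ - u 0‖ + l * ‖h τ‖ := by
        rw [hpl]
        refine (norm_add_le _ _).trans_eq ?_
        rw [norm_smul, Real.norm_of_nonneg hl.le]
      have h3 := norm_sub_le_norm_sub_add_norm_sub (u 0) (u τ) p.1
      rw [norm_sub_rev (u 0) (u τ)] at h3
      have h4 : l * (‖h τ‖ - 2 * δ / l) = l * ‖h τ‖ - 2 * δ := by field_simp
      linarith)
  rw [intervalIntegral.integral_sub hhi intervalIntegrable_const,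
    intervalIntegral.integral_const] at hest
  have h3 := norm_sub_le_norm_sub_add_norm_sub (u 0) (u t) p.1
  rw [norm_sub_rev (u 0) (u t)] at h3
  have h1 := hnear t ⟨ht.le, le_rfl⟩
  have h5 : (t - 0) • (2 * δ / l) = 2 * (δ + I) := by
    simp only [l, smul_eq_mul]
    field_simp
    ring
  rw [h5] at hest
  linarith

/-- A comparison principle: `φ ≤ ψ` if this holds initially and `φ - ψ` does not increase while it
is positive. -/
lemma le_of_sub_le_sub_of_lt {φ ψ : ℝ → ℝ} {T : ℝ} (hφ : ContinuousOn φ (Set.Icc 0 T))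
    (hψ : ContinuousOn ψ (Set.Icc 0 T)) (h0 : φ 0 ≤ ψ 0)
    (hstep : ∀ s t : ℝ, 0 ≤ s → s ≤ t → t ≤ T → (∀ τ ∈ Set.Ioo s t, ψ τ < φ τ) →
      φ t - φ s ≤ ψ t - ψ s) {t : ℝ} (ht : t ∈ Set.Icc 0 T) : φ t ≤ ψ t := by
  have hsub : Set.Icc 0 t ⊆ Set.Icc 0 T := Set.Icc_subset_Icc_right ht.2
  have hclosed : IsClosed {τ ∈ Set.Icc 0 t | φ τ ≤ ψ τ} :=
    isClosed_Icc.isClosed_le (hφ.mono hsub) (hψ.mono hsub)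
  have hcompact : IsCompact {τ ∈ Set.Icc 0 t | φ τ ≤ ψ τ} :=
    isCompact_Icc.of_isClosed_subset hclosed fun _ h => h.1
  obtain ⟨s, ⟨hs, hle⟩, hmax⟩ :=
    hcompact.exists_isGreatest ⟨0, ⟨le_rfl, ht.1⟩, h0⟩
  have := hstep s t hs.1 hs.2 ht.2 fun τ hτ => by
    by_contra! hcon
    exact absurd (hmax ⟨⟨hs.1.trans hτ.1.le, hτ.2.le⟩, hcon⟩) (not_le.2 hτ.1)
  linarith

/-- A supersolution of the transport problem `∂ₜΨ + (Ψ(x, t) - Ψ(x - ε, t)) / ε = η + L (t - x)²`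
that controls the distance between a solution and an implicit Euler scheme of step `ε`. -/
noncomputable def eulerBarrier (δ ε K η L x t : ℝ) : ℝ :=
  δ + K * ((t - x) ^ 2 + ε * t) + η * t + L * (t * (t - x) ^ 2 + ε * t ^ 2 / 2)

lemma hasDerivAt_eulerBarrier (δ K η L x t : ℝ) {ε : ℝ} (hε : ε ≠ 0) :
    HasDerivAt (eulerBarrier δ ε K η L x)
      ((eulerBarrier δ ε K η L (x - ε) t - eulerBarrier δ ε K η L x t) / ε
        + (η + L * (t - x) ^ 2)) t := by
  have hq : HasDerivAt (fun t : ℝ => (t - x) ^ 2) (2 * (t - x)) t := by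
    simpa using ((hasDerivAt_id' t).sub_const x).fun_pow 2
  have hsq : HasDerivAt (fun t : ℝ => t ^ 2) (2 * t) t := by
    simpa using (hasDerivAt_id' t).fun_pow 2
  have hd := ((((hq.add ((hasDerivAt_id t).const_mul ε)).const_mul K).const_add δ).add
    ((hasDerivAt_id t).const_mul η)).add
    ((((hasDerivAt_id t).mul hq).add ((hsq.const_mul ε).div_const 2)).const_mul L)
  refine hd.congr_deriv ?_
  simp only [eulerBarrier, id]
  field_simp
  ring

lemma continuous_eulerBarrier (δ ε K η L x : ℝ) : Continuous (eulerBarrier δ ε K η L x) := by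
  unfold eulerBarrier
  fun_prop

/-- An implicit Euler scheme moves by at most `C * ε` per step. -/
lemma norm_eulerScheme_sub_le {X : Type*} [NormedAddCommGroup X] [NormedSpace ℝ X]
    {A : Set (X × X)}
    (hacc : ∀ p ∈ A, ∀ q ∈ A, ∀ l : ℝ, 0 < l →
      ‖p.1 - q.1‖ ≤ ‖p.1 - q.1 + l • (p.2 - q.2)‖)
    {g : ℝ → X} {ε C : ℝ} (hε : 0 < ε) {p : ℕ → X × X} (hp : ∀ k, p k ∈ A)
    (hstep : ∀ k : ℕ, (p (k + 1)).1 + ε • (p (k + 1)).2 = (p k).1 + ε • g ((k + 1 : ℕ) * ε))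
    (hC : ∀ τ, ‖g τ‖ + ‖(p 0).2‖ ≤ C) (k : ℕ) : ‖(p k).1 - (p 0).1‖ ≤ C * (k * ε) := by
  induction k with
  | zero => simp
  | succ k ih =>
    have h1 := hacc _ (hp (k + 1)) _ (hp 0) ε hε
    have heq : (p (k + 1)).1 - (p 0).1 + ε • ((p (k + 1)).2 - (p 0).2)
        = ((p k).1 - (p 0).1) + ε • (g ((k + 1 : ℕ) * ε) - (p 0).2) := by
      rw [← sub_eq_zero, ← sub_eq_zero.2 (hstep k)]
      module
    rw [heq] at h1
    have h2 := norm_add_le ((p k).1 - (p 0).1) (ε • (g ((k + 1 : ℕ) * ε) - (p 0).2))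
    rw [norm_smul, Real.norm_of_nonneg hε.le] at h2
    have h3 := mul_le_mul_of_nonneg_left
      ((norm_sub_le (g ((k + 1 : ℕ) * ε)) (p 0).2).trans (hC _)) hε.le
    push_cast at *
    linarith

/-- Distance between an integral solution and an implicit Euler scheme for a regularized
right-hand side `g`. -/
lemma IsIntegralSolution.norm_sub_eulerScheme_le {X : Type*} [NormedAddCommGroup X]
    [NormedSpace ℝ X] {A : Set (X × X)} {T : ℝ} {h u : ℝ → X}
    (hu : IsIntegralSolution A T h u) (hh : IntegrableOn h (Set.Icc 0 T))
    (hacc : ∀ p ∈ A, ∀ q ∈ A, ∀ l : ℝ, 0 < l →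
      ‖p.1 - q.1‖ ≤ ‖p.1 - q.1 + l • (p.2 - q.2)‖)
    {g : ℝ → X} (hg : Continuous g) {ε C κ K η L : ℝ} (hε : 0 < ε) (hη : 0 ≤ η) (hL : 0 ≤ L)
    (hK : 0 ≤ K) (hκ : ∀ x, C * x ≤ κ + K * x ^ 2)
    (hgL : ∀ x y, ‖g x - g y‖ ≤ η + L * (x - y) ^ 2)
    {p : ℕ → X × X} (hp : ∀ k, p k ∈ A)
    (hstep : ∀ k : ℕ, (p (k + 1)).1 + ε • (p (k + 1)).2 = (p k).1 + ε • g ((k + 1 : ℕ) * ε))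
    (hC : ∀ τ, ‖g τ‖ + ‖(p 0).2‖ ≤ C) (k : ℕ) {t : ℝ} (ht : t ∈ Set.Icc 0 T) :
    ‖u t - (p k).1‖ ≤ eulerBarrier (‖u 0 - (p 0).1‖ + κ) ε K η L (k * ε) t
      + ∫ τ in (0 : ℝ)..t, ‖h τ - g τ‖ := by
  have hd : IntegrableOn (fun τ => ‖h τ - g τ‖) (Set.Icc 0 T) :=
    (hh.sub hg.integrableOn_Icc).norm
  have hd' := fun {s t : ℝ} => integrableOn_Icc_intervalIntegrable (s := s) (t := t) hd
  induction k generalizing t with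
  | zero =>
    have h1 := hu.sub_le_integral hh (hp 0) one_pos le_rfl ht.1 ht.2
      (F := fun τ => ‖h τ - g τ‖ + C) ((hd' le_rfl ht.1 ht.2).add intervalIntegrable_const) (by
        intro τ _
        have heq : u τ - ((p 0).1 + (1 : ℝ) • (p 0).2) + (1 : ℝ) • h τ
            = (u τ - (p 0).1) + ((h τ - g τ) + (g τ - (p 0).2)) := by module
        rw [heq]
        have h2 := norm_add_le (u τ - (p 0).1) ((h τ - g τ) + (g τ - (p 0).2))
        have h3 := norm_add_le (h τ - g τ) (g τ - (p 0).2)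
        have h4 := (norm_sub_le (g τ) (p 0).2).trans (hC τ)
        linarith)
    rw [intervalIntegral.integral_add (hd' le_rfl ht.1 ht.2) intervalIntegrable_const,
      intervalIntegral.integral_const, smul_eq_mul] at h1
    have h2 := hκ t
    have ht0 := ht.1
    have h3 : 0 ≤ K * (ε * t) + η * t + L * (t * t ^ 2 + ε * t ^ 2 / 2) := by positivity
    simp only [eulerBarrier, Nat.cast_zero, zero_mul, sub_zero] at h1 ⊢
    linarith
  | succ k ih =>
    set δ := ‖u 0 - (p 0).1‖ + κ
    have hprim : ContinuousOn (fun t => ∫ τ in (0 : ℝ)..t, ‖h τ - g τ‖) (Set.Icc 0 T) := by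
      rw [← Set.uIcc_of_le (ht.1.trans ht.2)] at hd ⊢
      exact intervalIntegral.continuousOn_primitive_interval hd
    refine le_of_sub_le_sub_of_lt (φ := fun t => ‖u t - (p (k + 1)).1‖)
      (ψ := fun t => eulerBarrier δ ε K η L ((k + 1 : ℕ) * ε) t
        + ∫ τ in (0 : ℝ)..t, ‖h τ - g τ‖)
      (hu.continuousOn.sub continuousOn_const).norm
      ((continuous_eulerBarrier _ _ _ _ _ _).continuousOn.add
        hprim) ?_ ?_ ht
    · have h1 := norm_eulerScheme_sub_le hacc hε hp hstep hC (k + 1)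
      have h2 := norm_sub_le_norm_sub_add_norm_sub (u 0) (p 0).1 (p (k + 1)).1
      rw [norm_sub_rev (p 0).1] at h2
      have h3 := hκ ((k + 1 : ℕ) * ε)
      simp only [eulerBarrier, intervalIntegral.integral_same, δ]
      nlinarith
    · intro s t hs hst htT hlt
      set D : ℝ → ℝ := fun τ =>
        (eulerBarrier δ ε K η L ((k + 1 : ℕ) * ε - ε) τ
          - eulerBarrier δ ε K η L ((k + 1 : ℕ) * ε) τ) / ε + (η + L * (τ - (k + 1 : ℕ) * ε) ^ 2)
        with hD
      have hDc : Continuous D := by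
        have h1 := continuous_eulerBarrier δ ε K η L ((k + 1 : ℕ) * ε - ε)
        have h2 := continuous_eulerBarrier δ ε K η L ((k + 1 : ℕ) * ε)
        fun_prop
      have hDi : IntervalIntegrable D volume s t := hDc.intervalIntegrable s t
      have h1 := hu.sub_le_integral hh (hp (k + 1)) hε hs hst htT
        (F := fun τ => D τ + ‖h τ - g τ‖) (hDi.add (hd' hs hst htT)) (by
          intro τ hτ
          have hprev := ih ⟨hs.trans hτ.1.le, hτ.2.le.trans htT⟩
          have hcur := hlt τ hτ
          have hx : ((k + 1 : ℕ) : ℝ) * ε - ε = k * ε := by push_cast; ring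
          have hεD : ε * (D τ + ‖h τ - g τ‖)
              = eulerBarrier δ ε K η L (k * ε) τ - eulerBarrier δ ε K η L ((k + 1 : ℕ) * ε) τ
                + ε * (‖h τ - g τ‖ + (η + L * (τ - (k + 1 : ℕ) * ε) ^ 2)) := by
            simp only [hD, hx]
            field_simp
            ring
          rw [hstep, hεD]
          have heq : u τ - ((p k).1 + ε • g ((k + 1 : ℕ) * ε)) + ε • h τ
              = (u τ - (p k).1) + ε • ((h τ - g τ) + (g τ - g ((k + 1 : ℕ) * ε))) := by module
          rw [heq]
          have h2 := norm_add_le (u τ - (p k).1)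
            (ε • ((h τ - g τ) + (g τ - g ((k + 1 : ℕ) * ε))))
          rw [norm_smul, Real.norm_of_nonneg hε.le] at h2
          have h3 := mul_le_mul_of_nonneg_left ((norm_add_le (h τ - g τ)
            (g τ - g ((k + 1 : ℕ) * ε))).trans (add_le_add_right (hgL _ _) _)) hε.le
          linarith)
      rw [intervalIntegral.integral_add hDi (hd' hs hst htT),
        intervalIntegral.integral_eq_sub_of_hasDerivAt
          (fun τ _ => hasDerivAt_eulerBarrier δ K η L ((k + 1 : ℕ) * ε) τ hε.ne') hDi] at h1
      have h2 := intervalIntegral.integral_add_adjacent_intervals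
        (hd' le_rfl hs (hst.trans htT)) (hd' hs hst htT)
      linarith

lemma exists_modulus_of_hasCompactSupport {X : Type*} [NormedAddCommGroup X] {g : ℝ → X}
    (hg : Continuous g) (hgs : HasCompactSupport g) {η : ℝ} (hη : 0 < η) :
    ∃ L, 0 ≤ L ∧ ∀ x y, ‖g x - g y‖ ≤ η + L * (x - y) ^ 2 := by
  obtain ⟨M, hM⟩ := hgs.exists_bound_of_continuous hg
  have hM0 : 0 ≤ M := (norm_nonneg _).trans (hM 0)
  obtain ⟨r, hr, hgr⟩ := Metric.uniformContinuous_iff.1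
    (hgs.uniformContinuous_of_continuous hg) η hη
  refine ⟨2 * M / r ^ 2, by positivity, fun x y => ?_⟩
  rcases lt_or_ge (dist x y) r with hxy | hxy
  · have h1 := (hgr hxy).le
    rw [dist_eq_norm] at h1
    have : 0 ≤ 2 * M / r ^ 2 * (x - y) ^ 2 := by positivity
    linarith
  · have h1 := (norm_sub_le (g x) (g y)).trans (add_le_add (hM x) (hM y))
    have h2 : r ^ 2 ≤ (x - y) ^ 2 := by
      rw [← sq_abs (x - y), ← Real.dist_eq]
      gcongr
    have h3 : 2 * M ≤ 2 * M / r ^ 2 * (x - y) ^ 2 := by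
      calc 2 * M = 2 * M / r ^ 2 * r ^ 2 := by field_simp
        _ ≤ _ := by gcongr
    linarith

/-- Uniqueness / `L¹`-contraction for integral solutions (Bénilan): if `A` is m-accretive on a
Banach space `X`, `h ∈ L¹(0,T;X)`, and `u, v : [0,T] → X` are integral solutions of
`u' + Au ∋ h` with initial data `u₀, v₀`, then `‖u(t) - v(t)‖ ≤ ‖u₀ - v₀‖` on `[0,T]`. -/
theorem integral_solutions_contraction
    {X : Type*} [NormedAddCommGroup X] [NormedSpace ℝ X] [CompleteSpace X]
    (A : Set (X × X))
    (hacc : ∀ p ∈ A, ∀ q ∈ A, ∀ l : ℝ, 0 < l →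
      ‖p.1 - q.1‖ ≤ ‖p.1 - q.1 + l • (p.2 - q.2)‖)
    (hm : ∀ l : ℝ, 0 < l → ∀ g : X, ∃ p ∈ A, p.1 + l • p.2 = g)
    (T : ℝ) (hT : 0 < T) (h : ℝ → X) (hh : IntegrableOn h (Set.Icc 0 T))
    (u v : ℝ → X) (u₀ v₀ : X)
    (hu_cont : ContinuousOn u (Set.Icc 0 T)) (hv_cont : ContinuousOn v (Set.Icc 0 T))
    (hu0 : u 0 = u₀) (hv0 : v 0 = v₀)
    (hu_int : ∀ p ∈ A, ∀ s t : ℝ, 0 ≤ s → s ≤ t → t ≤ T →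
      ‖u t - p.1‖ - ‖u s - p.1‖ ≤ ∫ τ in s..t, bracket (u τ - p.1) (h τ - p.2))
    (hv_int : ∀ p ∈ A, ∀ s t : ℝ, 0 ≤ s → s ≤ t → t ≤ T →
      ‖v t - p.1‖ - ‖v s - p.1‖ ≤ ∫ τ in s..t, bracket (v τ - p.1) (h τ - p.2)) :
    ∀ t ∈ Set.Icc (0 : ℝ) T, ‖u t - v t‖ ≤ ‖u₀ - v₀‖ := by
  intro t ht
  have hu : IsIntegralSolution A T h u := ⟨hu_cont, hu_int⟩
  have hv : IsIntegralSolution A T h v := ⟨hv_cont, hv_int⟩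
  subst hu0 hv0
  rcases ht.1.eq_or_lt with rfl | htpos
  · rfl
  refine le_of_forall_pos_le_add fun γ' hγ' => ?_
  obtain ⟨γ, hγ, rfl⟩ : ∃ γ, 0 < γ ∧ γ' = 16 * γ := ⟨γ' / 16, by positivity, by ring⟩
  obtain ⟨p₀, hp₀, hup₀⟩ := hu.exists_norm_initial_sub_le hh hT hm hγ
  obtain ⟨g, hgs, hgh, hg, hgi⟩ := Integrable.exists_hasCompactSupport_integral_sub_le hh hγ
  obtain ⟨M, hM⟩ := hgs.exists_bound_of_continuous hg
  obtain ⟨L, hL, hgL⟩ := exists_modulus_of_hasCompactSupport hg hgs (div_pos hγ htpos)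
  set C := M + ‖p₀.2‖
  set K := C ^ 2 / (4 * γ)
  have hK : 0 ≤ K := by positivity
  have hκ : ∀ x, C * x ≤ γ + K * x ^ 2 := by
    intro x
    have : γ + K * x ^ 2 - C * x = (2 * γ - C * x) ^ 2 / (4 * γ) := by
      simp only [K]
      field_simp
      ring
    have : 0 ≤ (2 * γ - C * x) ^ 2 / (4 * γ) := by positivity
    linarith
  obtain ⟨n, hn⟩ := exists_nat_gt ((K * t + L * t ^ 2 / 2) * t / γ)
  have hn0 : (0 : ℝ) < n := lt_of_le_of_lt (by positivity) hn
  set ε := t / n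
  have hε : 0 < ε := by positivity
  have hnε : n * ε = t := by simp only [ε]; field_simp
  have hsmall : K * (ε * t) + L * (ε * t ^ 2 / 2) ≤ γ := by
    rw [div_lt_iff₀ hγ] at hn
    have : K * (ε * t) + L * (ε * t ^ 2 / 2) = (K * t + L * t ^ 2 / 2) * t / n := by
      simp only [ε]
      field_simp
    rw [this, div_le_iff₀ hn0]
    linarith
  choose! J hJA hJ using hm ε hε
  let p : ℕ → X × X := fun k =>
    Nat.rec p₀ (fun k q => J (q.1 + ε • g ((k + 1 : ℕ) * ε))) k
  have hp : ∀ k, p k ∈ A := by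
    rintro (_ | k)
    · exact hp₀
    · exact hJA _
  have hstep : ∀ k : ℕ,
      (p (k + 1)).1 + ε • (p (k + 1)).2 = (p k).1 + ε • g ((k + 1 : ℕ) * ε) := fun k => hJ _
  have hC : ∀ τ, ‖g τ‖ + ‖(p 0).2‖ ≤ C := fun τ => add_le_add_left (hM τ) _
  have herr : ∫ τ in (0 : ℝ)..t, ‖h τ - g τ‖ ≤ γ := by
    rw [intervalIntegral.integral_of_le ht.1]
    exact (setIntegral_mono_set (hh.sub hgi).norm (Eventually.of_forall fun _ => norm_nonneg _)
      (Set.Ioc_subset_Icc_self.trans (Set.Icc_subset_Icc_right ht.2)).eventuallyLE).trans hgh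
  have key : ∀ w : ℝ → X, IsIntegralSolution A T h w →
      ‖w t - (p n).1‖ ≤ ‖w 0 - p₀.1‖ + 4 * γ := by
    intro w hw
    have h1 := hw.norm_sub_eulerScheme_le hh hacc hg hε (by positivity) hL hK hκ hgL hp hstep hC n ht
    have h2 : γ / t * t = γ := by field_simp
    have h3 : p 0 = p₀ := rfl
    simp only [eulerBarrier, hnε, h3, h2, sub_self] at h1
    linarith
  have h1 := key u hu
  have h2 := key v hv
  have h3 := norm_sub_le_norm_sub_add_norm_sub (u t) (p n).1 (v t)
  have h4 := norm_sub_le_norm_sub_add_norm_sub (v 0) (u 0) p₀.1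
  rw [norm_sub_rev (v 0) (u 0)] at h4
  rw [norm_sub_rev (p n).1] at h3
  linarith
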